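/- (Chen–Stein approximation.) Let I be a finite index set and W = Σ_{i∈I} Z_i, where each Z_i is a Bernoulli random variable with parameter p_i ∈ [0,1], and let λ = Σ_{i∈I} p_i. Assume that for each i ∈ I there is a pair of coupled integer-valued random variables (U_i, V_i) such that U_i has the distribution of W and V_i + 1 has the distribution of W conditioned on Z_i = 1. Then d_TV(W, Po(λ)) ≤ min{1, λ^{−1}} · Σ_{i∈I} p_i · E(|U_i − V_i|). -/

import Mathlib

open MeasureTheory

/-- The Poisson probability mass function with mean `lam`. -/
noncomputable def poissonPMF (lam : ℝ) (i : ℕ) : ℝ :=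
  Real.exp (-lam) * lam ^ i / (Nat.factorial i)

namespace CS

lemma pi_pos {l : ℝ} (hl : 0 < l) (i : ℕ) : 0 < poissonPMF l i := by
  unfold poissonPMF; positivity

lemma pi_succ (l : ℝ) (i : ℕ) : ((i : ℝ) + 1) * poissonPMF l (i+1) = l * poissonPMF l i := by
  unfold poissonPMF
  have : ((Nat.factorial i : ℕ) : ℝ) ≠ 0 := by positivity
  have h2 : (i : ℝ) + 1 ≠ 0 := by positivity
  rw [Nat.factorial_succ]; push_cast
  field_simp
  ring

lemma pi_hasSum (l : ℝ) : HasSum (poissonPMF l) 1 := by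
  have h := (NormedSpace.expSeries_div_hasSum_exp (𝔸 := ℝ) l).mul_left (Real.exp (-l))
  rw [← Real.exp_eq_exp_ℝ, ← Real.exp_add] at h
  simp only [neg_add_cancel, Real.exp_zero] at h
  refine h.congr_fun ?_ |> fun h => h
  intro i; unfold poissonPMF; ring

noncomputable def F (l : ℝ) (j : ℕ) : ℝ := ∑ i ∈ Finset.range (j+1), poissonPMF l i

lemma F_succ (l : ℝ) (j : ℕ) : F l (j+1) = F l j + poissonPMF l (j+1) := by
  unfold F; rw [Finset.sum_range_succ]

/-- log-concavity -/
lemma pi_lc {l : ℝ} (hl : 0 < l) {i j : ℕ} (hij : i ≤ j) :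
    poissonPMF l i * poissonPMF l (j+1) ≤ poissonPMF l (i+1) * poissonPMF l j := by
  have h1 := pi_succ l i
  have h2 := pi_succ l j
  have e1 : poissonPMF l (i+1) = l * poissonPMF l i / (i+1) := by
    rw [← h1]; field_simp
  have e2 : poissonPMF l (j+1) = l * poissonPMF l j / (j+1) := by
    rw [← h2]; field_simp
  rw [e1, e2]
  have := pi_pos hl i
  have := pi_pos hl j
  have hc : (i:ℝ) ≤ j := by exact_mod_cast hij
  rw [← mul_div_assoc, div_mul_eq_mul_div]
  rw [show poissonPMF l i * (l * poissonPMF l j) = l * poissonPMF l i * poissonPMF l j by ring]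
  gcongr

lemma F_sharp {l : ℝ} (hl : 0 < l) (j : ℕ) :
    F l j * poissonPMF l (j+1) ≤ (F l (j+1) - poissonPMF l 0) * poissonPMF l j := by
  have : F l (j+1) - poissonPMF l 0 = ∑ i ∈ Finset.range (j+1), poissonPMF l (i+1) := by
    unfold F; rw [Finset.sum_range_succ' _ (j+1)]; ring
  rw [this]; unfold F
  rw [Finset.sum_mul, Finset.sum_mul]
  refine Finset.sum_le_sum fun i hi => pi_lc hl ?_
  have := Finset.mem_range.1 hi; omega

lemma F_mono {l : ℝ} (hl : 0 < l) (j : ℕ) :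
    F l j / poissonPMF l j ≤ F l (j+1) / poissonPMF l (j+1) := by
  rw [div_le_div_iff₀ (pi_pos hl _) (pi_pos hl _)]
  have := F_sharp hl j
  nlinarith [mul_pos (pi_pos hl 0) (pi_pos hl j)]

lemma T_eq (l : ℝ) (j : ℕ) : HasSum (fun i => poissonPMF l (i + (j+1))) (1 - F l j) := by
  exact (hasSum_nat_add_iff' (j+1)).2 (pi_hasSum l)

lemma T_anti {l : ℝ} (hl : 0 < l) (j : ℕ) :
    (1 - F l (j+1)) / poissonPMF l (j+1) ≤ (1 - F l j) / poissonPMF l j := by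
  rw [div_le_div_iff₀ (pi_pos hl _) (pi_pos hl _)]
  refine hasSum_le (fun i => ?_) ((T_eq l (j+1)).mul_right _) ((T_eq l j).mul_right _)
  have := pi_lc hl (show j ≤ i + (j+1) by omega)
  rw [show i + (j+1+1) = i + (j+1) + 1 by ring]
  linarith

lemma F_le {l : ℝ} (hl : 0 < l) (j : ℕ) : F l j ≤ 1 := by
  have := (T_eq l j).nonneg (fun i => (pi_pos hl _).le)
  linarith

/-- single-point Stein solution (shifted) -/
noncomputable def h1 (l : ℝ) (k j : ℕ) : ℝ :=
  poissonPMF l k * ((if k ≤ j then 1 else 0) - F l j) / (l * poissonPMF l j)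

lemma bd {l : ℝ} (hl : 0 < l) : (1 - poissonPMF l 0) / l ≤ min 1 l⁻¹ := by
  have h0 : poissonPMF l 0 = Real.exp (-l) := by simp [poissonPMF]
  have := Real.add_one_le_exp (-l)
  have := Real.exp_pos (-l)
  rw [h0]
  refine le_min ?_ ?_
  · rw [div_le_one hl]; linarith
  · rw [inv_eq_one_div]; gcongr; linarith

lemma h1_diag {l : ℝ} (hl : 0 < l) (j : ℕ) :
    h1 l (j+1) (j+1) - h1 l (j+1) j ≤ min 1 l⁻¹ := by
  refine le_trans ?_ (bd hl)
  have p1 := pi_pos hl (j+1)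
  have p0 := pi_pos hl j
  have e : h1 l (j+1) (j+1) - h1 l (j+1) j
      = (1 - F l (j+1) + F l j * poissonPMF l (j+1) / poissonPMF l j) / l := by
    unfold h1; simp; field_simp; ring
  rw [e]
  have : F l j * poissonPMF l (j+1) / poissonPMF l j ≤ F l (j+1) - poissonPMF l 0 := by
    rw [div_le_iff₀ p0]; exact F_sharp hl j
  gcongr; linarith

lemma h1_off {l : ℝ} (hl : 0 < l) {k j : ℕ} (hk : k ≠ j + 1) :
    h1 l k (j+1) - h1 l k j ≤ 0 := by
  have pk := pi_pos hl k
  unfold h1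
  rcases lt_or_gt_of_ne hk with h | h
  · rw [if_pos (by omega), if_pos (by omega)]
    have := T_anti hl j
    have e : ∀ j, poissonPMF l k * (1 - F l j) / (l * poissonPMF l j)
      = poissonPMF l k / l * ((1 - F l j) / poissonPMF l j) := by
      intro j; rw [mul_div_mul_comm]
    rw [e, e, ← mul_sub]
    exact mul_nonpos_of_nonneg_of_nonpos (by positivity) (by linarith)
  · rw [if_neg (by omega), if_neg (by omega)]
    have := F_mono hl j
    have e : ∀ j, poissonPMF l k * (0 - F l j) / (l * poissonPMF l j)
      = - (poissonPMF l k / l * (F l j / poissonPMF l j)) := by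
      intro j; rw [mul_div_mul_comm]; ring
    rw [e, e, sub_nonpos, neg_le_neg_iff]
    gcongr

noncomputable def hA (l : ℝ) (A : Finset ℕ) (j : ℕ) : ℝ := ∑ k ∈ A, h1 l k j

lemma min_nn {l : ℝ} (hl : 0 < l) : 0 ≤ min 1 l⁻¹ := le_min zero_le_one (by positivity)

lemma hA_up {l : ℝ} (hl : 0 < l) (A : Finset ℕ) (j : ℕ) :
    hA l A (j+1) - hA l A j ≤ min 1 l⁻¹ := by
  unfold hA
  rw [← Finset.sum_sub_distrib]
  by_cases hj : j + 1 ∈ A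
  · rw [← Finset.add_sum_erase _ _ hj]
    have := h1_diag hl j
    have : ∑ k ∈ A.erase (j+1), (h1 l k (j+1) - h1 l k j) ≤ 0 :=
      Finset.sum_nonpos fun k hk => h1_off hl (Finset.ne_of_mem_erase hk)
    linarith
  · have : ∑ k ∈ A, (h1 l k (j+1) - h1 l k j) ≤ 0 :=
      Finset.sum_nonpos fun k hk => h1_off hl (fun h => hj (h ▸ hk))
    linarith [min_nn hl]

lemma hA_range {l : ℝ} (hl : 0 < l) {N j : ℕ} (hj : j ≤ N) :
    hA l (Finset.range (N+1)) j = (1 - F l N) / l * (F l j / poissonPMF l j) := by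
  unfold hA h1
  rw [← Finset.sum_div]
  simp only [mul_sub, Finset.sum_sub_distrib, ← Finset.sum_mul]
  have : ∑ k ∈ Finset.range (N+1), poissonPMF l k * (if k ≤ j then 1 else 0) = F l j := by
    simp only [mul_ite, mul_one, mul_zero]
    rw [← Finset.sum_filter]; unfold F
    congr 1; ext k; simp; omega
  rw [this]
  change (F l j - F l N * F l j) / _ = _
  have := pi_pos hl j
  field_simp

lemma hA_low {l : ℝ} (hl : 0 < l) (A : Finset ℕ) (j : ℕ) :
    -(min 1 l⁻¹) ≤ hA l A (j+1) - hA l A j := by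
  obtain ⟨N, hN, hjN⟩ : ∃ N, A ⊆ Finset.range (N+1) ∧ j + 1 ≤ N := by
    refine ⟨A.sup id + (j + 1), fun k hk => ?_, by omega⟩
    have : k ≤ A.sup id := Finset.le_sup (f := id) hk
    simp; omega
  have e : ∀ i, hA l (Finset.range (N+1) \ A) i + hA l A i = hA l (Finset.range (N+1)) i :=
    fun i => Finset.sum_sdiff hN
  have a := hA_up hl (Finset.range (N+1) \ A) j
  have b : hA l (Finset.range (N+1)) j ≤ hA l (Finset.range (N+1)) (j+1) := by
    rw [hA_range hl (by omega), hA_range hl hjN]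
    have := F_le hl N
    exact mul_le_mul_of_nonneg_left (F_mono hl j) (div_nonneg (by linarith) hl.le)
  linarith [e j, e (j+1)]

lemma hA_lip {l : ℝ} (hl : 0 < l) (A : Finset ℕ) (a b : ℕ) :
    |hA l A a - hA l A b| ≤ min 1 l⁻¹ * |(a:ℝ) - b| := by
  have key : ∀ a d : ℕ, |hA l A (a+d) - hA l A a| ≤ min 1 l⁻¹ * d := by
    intro a d
    induction d with
    | zero => simp
    | succ d ih =>
      have h := abs_le.2 ⟨hA_low hl A (a+d), hA_up hl A (a+d)⟩
      have := abs_sub_le (hA l A (a+(d+1))) (hA l A (a+d)) (hA l A a)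
      push_cast
      rw [← add_assoc] at *
      linarith
  rcases le_total a b with h | h
  · obtain ⟨d, rfl⟩ := Nat.exists_eq_add_of_le h
    rw [abs_sub_comm, abs_sub_comm (a:ℝ)]
    simpa using key a d
  · obtain ⟨d, rfl⟩ := Nat.exists_eq_add_of_le h
    simpa using key b d

lemma h1_zero {l : ℝ} (hl : 0 < l) (k : ℕ) :
    l * h1 l k 0 = (if k = 0 then 1 else 0) - poissonPMF l k := by
  have := pi_pos hl 0
  have e : F l 0 = poissonPMF l 0 := by simp [F]
  unfold h1
  rw [e]
  by_cases hk : k = 0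
  · subst hk; simp; field_simp
  · simp [hk]; field_simp

lemma h1_succ {l : ℝ} (hl : 0 < l) (k j : ℕ) :
    l * h1 l k (j+1) - (j+1) * h1 l k j = (if k = j + 1 then 1 else 0) - poissonPMF l k := by
  have p0 := pi_pos hl j
  have p1 := pi_pos hl (j+1)
  have hs : l * poissonPMF l j = (j+1) * poissonPMF l (j+1) := (pi_succ l j).symm
  have e : l * h1 l k (j+1) - (j+1) * h1 l k j
     = poissonPMF l k * (((if k ≤ j + 1 then 1 else 0) - F l (j+1))
        - ((if k ≤ j then 1 else 0) - F l j)) / poissonPMF l (j+1) := by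
    unfold h1
    rw [hs]
    have : (j:ℝ) + 1 ≠ 0 := by positivity
    field_simp
  rw [e, F_succ]
  rcases lt_trichotomy k (j+1) with h | h | h
  · rw [if_pos h.le, if_pos (by omega), if_neg h.ne]; field_simp; ring
  · subst h; simp; field_simp; ring
  · rw [if_neg (by omega), if_neg (by omega), if_neg (by omega)]; field_simp; ring

lemma hA_zero {l : ℝ} (hl : 0 < l) (A : Finset ℕ) :
    l * hA l A 0 = (if 0 ∈ A then 1 else 0) - ∑ k ∈ A, poissonPMF l k := by
  unfold hA
  rw [Finset.mul_sum, Finset.sum_congr rfl (fun k _ => h1_zero hl k), Finset.sum_sub_distrib]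
  simp

lemma hA_succ {l : ℝ} (hl : 0 < l) (A : Finset ℕ) (j : ℕ) :
    l * hA l A (j+1) - (j+1) * hA l A j
      = (if j + 1 ∈ A then 1 else 0) - ∑ k ∈ A, poissonPMF l k := by
  unfold hA
  rw [Finset.mul_sum, Finset.mul_sum, ← Finset.sum_sub_distrib,
    Finset.sum_congr rfl (fun k _ => h1_succ hl k j), Finset.sum_sub_distrib]
  simp

/-- total variation as sum of positive part over a finite set -/
lemma tv_eq (w q : ℕ → ℝ) (n : ℕ) (hw : ∀ m, n < m → w m = 0) (hq0 : ∀ m, 0 ≤ q m)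
    (hq : HasSum q 1) (hw1 : ∑ m ∈ Finset.range (n+1), w m = 1) :
    ∃ A ⊆ Finset.range (n+1),
      (1/2) * ∑' m, |w m - q m| = ∑ m ∈ A, (w m - q m) := by
  refine ⟨(Finset.range (n+1)).filter (fun m => q m < w m), Finset.filter_subset _ _, ?_⟩
  have hws : HasSum w 1 := by
    rw [← hw1]; refine hasSum_sum_of_ne_finset_zero fun m hm => hw m ?_
    simp at hm; omega
  have hd := hws.sub hq
  have hp : HasSum (fun m => if q m < w m then 2 * (w m - q m) else 0)
      (∑ m ∈ Finset.range (n+1), if q m < w m then 2 * (w m - q m) else 0) := by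
    refine hasSum_sum_of_ne_finset_zero fun m hm => ?_
    rw [if_neg]; rw [hw m (by simp at hm; omega)]; exact not_lt.2 (hq0 m)
  have := hp.sub hd
  have e : (fun m => |w m - q m|) =
      fun m => (if q m < w m then 2 * (w m - q m) else 0) - (w m - q m) := by
    ext m
    split_ifs with h
    · rw [abs_of_pos (by linarith)]; ring
    · rw [abs_of_nonpos (by linarith)]; ring
  rw [e, this.tsum_eq, Finset.sum_filter]
  simp only [sub_self, sub_zero]
  rw [Finset.mul_sum]
  refine Finset.sum_congr rfl fun m _ => ?_
  split_ifs <;> ring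

lemma int_fin {Ω : Type*} [MeasurableSpace Ω] (μ : Measure Ω) [IsProbabilityMeasure μ]
    (X : Ω → ℕ) (hX : Measurable X) (n : ℕ) (h0 : ∀ m, n < m → μ {ω | X ω = m} = 0)
    (h : ℕ → ℝ) :
    Integrable (fun ω => h (X ω)) μ ∧
    ∫ ω, h (X ω) ∂μ = ∑ m ∈ Finset.range (n+1), (μ {ω | X ω = m}).toReal * h m := by
  have hm : ∀ m, MeasurableSet {ω | X ω = m} := fun m => hX (measurableSet_singleton m)
  have hae : ∀ᵐ ω ∂μ, ∀ m, n < m → X ω ≠ m := by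
    rw [ae_all_iff]; intro m
    by_cases hm : n < m
    · have := h0 m hm
      rw [ae_iff]; simpa [hm] using this
    · simp [hm]
  have hint : ∀ m ∈ Finset.range (n+1),
      Integrable (({ω | X ω = m}).indicator (fun _ => h m)) μ :=
    fun m _ => (integrable_const (h m)).indicator (hm m)
  have e : (fun ω => h (X ω)) =ᵐ[μ]
      fun ω => ∑ m ∈ Finset.range (n+1), ({ω | X ω = m}).indicator (fun _ => h m) ω := by
    filter_upwards [hae] with ω hω
    have : X ω ∈ Finset.range (n+1) := by
      by_contra hc
      exact hω (X ω) (by simp at hc; omega) rfl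
    rw [Finset.sum_eq_single_of_mem _ this]
    · simp
    · intro b _ hb
      simp [hb.symm]
  refine ⟨(integrable_finsetSum _ hint).congr e.symm, ?_⟩
  rw [integral_congr_ae e, integral_finsetSum _ hint]
  refine Finset.sum_congr rfl fun m _ => ?_
  rw [integral_indicator_const _ (hm m)]
  simp [Measure.real]

end CS

/-- **Chen–Stein approximation.** Let `W = Σ_{i ∈ I} Z_i` be a sum of Bernoulli random
variables `Z_i` with parameters `p_i`, and `λ = Σ_{i ∈ I} p_i`. Suppose for each `i ∈ I` there
is a coupled pair `(U_i, V_i)` with `U_i` distributed as `W` and `V_i + 1` distributed as `W`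
conditioned on `Z_i = 1`. Then
`d_TV(W, Po(λ)) ≤ min{1, λ⁻¹} · Σ_{i ∈ I} p_i · E|U_i - V_i|`. -/
theorem chen_stein {Ω ι : Type*} [MeasurableSpace Ω] (μ : Measure Ω)
    [IsProbabilityMeasure μ]
    (I : Finset ι) (Z : ι → Ω → ℕ) (p : ι → ℝ)
    (hZmeas : ∀ i ∈ I, Measurable (Z i))
    (hZ01 : ∀ i ∈ I, ∀ ω : Ω, Z i ω = 0 ∨ Z i ω = 1)
    (hZp : ∀ i ∈ I, (μ {ω | Z i ω = 1}).toReal = p i)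
    (W : Ω → ℕ) (hW : W = fun ω => ∑ i ∈ I, Z i ω)
    (lam : ℝ) (hlam : lam = ∑ i ∈ I, p i)
    (U V : ι → Ω → ℕ)
    (hUmeas : ∀ i ∈ I, Measurable (U i)) (hVmeas : ∀ i ∈ I, Measurable (V i))
    (hU : ∀ i ∈ I, ∀ m : ℕ, μ {ω | U i ω = m} = μ {ω | W ω = m})
    (hV : ∀ i ∈ I, ∀ m : ℕ,
      μ {ω | V i ω = m} * μ {ω | Z i ω = 1} = μ ({ω | W ω = m + 1} ∩ {ω | Z i ω = 1}))
    (hInt : ∀ i ∈ I, Integrable (fun ω => |(U i ω : ℝ) - (V i ω : ℝ)|) μ) :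
    (1 / 2) * ∑' m : ℕ, |(μ {ω | W ω = m}).toReal - poissonPMF lam m| ≤
      min 1 lam⁻¹ * ∑ i ∈ I, p i * ∫ ω, |(U i ω : ℝ) - (V i ω : ℝ)| ∂μ := by
  have hWm : Measurable W := by
    rw [hW]; exact Finset.measurable_sum _ (fun i hi => hZmeas i hi)
  have hp0 : ∀ i ∈ I, 0 ≤ p i := fun i hi => by rw [← hZp i hi]; exact ENNReal.toReal_nonneg
  have hWle : ∀ ω, W ω ≤ I.card := by
    intro ω; rw [hW]
    calc ∑ i ∈ I, Z i ω ≤ ∑ i ∈ I, 1 :=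
          Finset.sum_le_sum fun i hi => by rcases hZ01 i hi ω with h | h <;> omega
      _ = I.card := by simp
  set n := I.card with hn
  have hW0 : ∀ m, n < m → μ {ω | W ω = m} = 0 := by
    intro m hm
    have : {ω | W ω = m} = ∅ := by
      ext ω; have := hWle ω; simp; omega
    rw [this]; simp
  set w : ℕ → ℝ := fun m => (μ {ω | W ω = m}).toReal with hw
  have hlam0 : 0 ≤ lam := by rw [hlam]; exact Finset.sum_nonneg hp0
  have hw1 : ∑ m ∈ Finset.range (n+1), w m = 1 := by
    have := (CS.int_fin μ W hWm n hW0 (fun _ => 1)).2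
    simpa using this.symm
  have hZW : ∀ m : ℕ, ∑ i ∈ I, (μ ({ω | W ω = m} ∩ {ω | Z i ω = 1})).toReal = m * w m := by
    intro m
    have hmW : MeasurableSet {ω | W ω = m} := hWm (measurableSet_singleton m)
    have hmZ : ∀ i ∈ I, MeasurableSet ({ω | W ω = m} ∩ {ω | Z i ω = 1}) :=
      fun i hi => hmW.inter (hZmeas i hi (measurableSet_singleton 1))
    have a : ∀ i ∈ I, (μ ({ω | W ω = m} ∩ {ω | Z i ω = 1})).toReal
        = ∫ ω, ({ω | W ω = m} ∩ {ω | Z i ω = 1}).indicator (fun _ => (1:ℝ)) ω ∂μ := by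
      intro i hi
      rw [integral_indicator_const _ (hmZ i hi)]; simp [Measure.real]
    rw [Finset.sum_congr rfl a, ← integral_finsetSum _
      (fun i hi => (integrable_const (1:ℝ)).indicator (hmZ i hi))]
    have b : (fun ω => ∑ i ∈ I, ({ω | W ω = m} ∩ {ω | Z i ω = 1}).indicator (fun _ => (1:ℝ)) ω)
        = ({ω | W ω = m}).indicator (fun _ => (m:ℝ)) := by
      ext ω
      by_cases h : W ω = m
      · have : (m:ℝ) = ∑ i ∈ I, (Z i ω : ℝ) := by rw [← h, hW]; push_cast; rfl
        rw [Set.indicator_of_mem (by exact h), this]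
        refine Finset.sum_congr rfl fun i hi => ?_
        rcases hZ01 i hi ω with h' | h' <;> simp [Set.indicator, h, h']
      · simp [Set.indicator, h]
    rw [b, integral_indicator_const _ hmW]
    simp [Measure.real, hw, mul_comm]
  have hv : ∀ i ∈ I, ∀ m : ℕ, p i * (μ {ω | V i ω = m}).toReal
      = (μ ({ω | W ω = m + 1} ∩ {ω | Z i ω = 1})).toReal := by
    intro i hi m
    rw [← hV i hi m, ENNReal.toReal_mul, hZp i hi, mul_comm]
  rcases hlam0.eq_or_lt with h0 | hl
  · -- degenerate case
    have hpz : ∀ i ∈ I, p i = 0 := by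
      exact (Finset.sum_eq_zero_iff_of_nonneg hp0).1 (by rw [← hlam, ← h0])
    have hwz : ∀ m, m ≠ 0 → w m = 0 := by
      intro m hm
      obtain ⟨k, rfl⟩ := Nat.exists_eq_succ_of_ne_zero hm
      have := hZW (k+1)
      rw [Finset.sum_eq_zero (fun i hi => by rw [← hv i hi k, hpz i hi, zero_mul])] at this
      have hk : ((k+1 : ℕ) : ℝ) ≠ 0 := by positivity
      exact (mul_eq_zero.1 this.symm).resolve_left hk
    have hw0 : w 0 = 1 := by
      rw [← hw1, Finset.sum_eq_single_of_mem 0 (by simp) (fun b _ hb => hwz b hb)]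
    have : ∀ m, |w m - poissonPMF lam m| = 0 := by
      intro m
      rw [← h0]
      by_cases hm : m = 0
      · subst hm; simp [hw0, poissonPMF]
      · simp [hwz m hm, poissonPMF, hm]
    rw [tsum_congr this, ← h0]
    simp
  obtain ⟨A, hA, hTV⟩ := CS.tv_eq w (poissonPMF lam) n
    (fun m hm => by simp [hw, hW0 m hm]) (fun m => (CS.pi_pos hl m).le) (CS.pi_hasSum lam) hw1
  rw [hTV]
  set h := CS.hA lam A with hh
  have s1 : ∑ m ∈ A, (w m - poissonPMF lam m)
      = ∑ m ∈ Finset.range (n+1),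
          w m * ((if m ∈ A then 1 else 0) - ∑ k ∈ A, poissonPMF lam k) := by
    simp only [mul_sub, Finset.sum_sub_distrib, ← Finset.sum_mul, hw1, one_mul]
    congr 1
    simp only [mul_ite, mul_one, mul_zero]
    rw [← Finset.sum_filter]
    congr 1; ext k; simp
    intro hk; simpa using hA hk
  have s2 : ∑ m ∈ Finset.range (n+1),
          w m * ((if m ∈ A then 1 else 0) - ∑ k ∈ A, poissonPMF lam k)
      = lam * ∑ m ∈ Finset.range (n+1), w m * h m
        - ∑ m ∈ Finset.range n, (((m+1 : ℕ) : ℝ) * w (m+1)) * h m := by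
    rw [Finset.sum_range_succ', Finset.sum_range_succ' (fun m => w m * h m), ← CS.hA_zero hl A,
      Finset.sum_congr rfl (fun m _ => by rw [← CS.hA_succ hl A m])]
    rw [mul_add, Finset.mul_sum, add_sub_right_comm, ← Finset.sum_sub_distrib]
    congr 1
    · refine Finset.sum_congr rfl fun m _ => ?_
      push_cast; rw [← hh]; ring
    · rw [← hh]; ring
  have hvz : ∀ i ∈ I, p i ≠ 0 → ∀ m, n ≤ m → μ {ω | V i ω = m} = 0 := by
    intro i hi hpi m hm
    have e := hv i hi m
    have : μ ({ω | W ω = m + 1} ∩ {ω | Z i ω = 1}) = 0 :=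
      measure_mono_null Set.inter_subset_left (hW0 (m+1) (by omega))
    rw [this, ENNReal.toReal_zero] at e
    have := (mul_eq_zero.1 e).resolve_left hpi
    exact (ENNReal.toReal_eq_zero_iff _).1 this |>.resolve_right (measure_ne_top _ _)
  have s3 : lam * ∑ m ∈ Finset.range (n+1), w m * h m
        - ∑ m ∈ Finset.range n, (((m+1 : ℕ) : ℝ) * w (m+1)) * h m
      = ∑ i ∈ I, p i * (∑ m ∈ Finset.range (n+1), w m * h m
          - ∑ m ∈ Finset.range (n+1), (μ {ω | V i ω = m}).toReal * h m) := by
    simp only [mul_sub, Finset.sum_sub_distrib, ← Finset.sum_mul, ← hlam]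
    congr 1
    simp only [Finset.mul_sum]
    rw [Finset.sum_comm, Finset.sum_range_succ]
    have z : ∑ i ∈ I, p i * ((μ {ω | V i ω = n}).toReal * h n) = 0 := by
      refine Finset.sum_eq_zero fun i hi => ?_
      by_cases hpi : p i = 0
      · simp [hpi]
      · rw [hvz i hi hpi n le_rfl]; simp
    rw [z, add_zero]
    refine Finset.sum_congr rfl fun m _ => ?_
    rw [← hZW (m+1), Finset.sum_mul]
    refine Finset.sum_congr rfl fun i hi => ?_
    rw [← hv i hi m]; ring
  rw [s1, s2, s3, Finset.mul_sum]
  refine Finset.sum_le_sum fun i hi => ?_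
  rw [mul_left_comm]
  by_cases hpi : p i = 0
  · simp [hpi]
  refine mul_le_mul_of_nonneg_left ?_ (hp0 i hi)
  obtain ⟨iU, eU⟩ := CS.int_fin μ (U i) (hUmeas i hi) n
    (fun m hm => by rw [hU i hi m]; exact hW0 m hm) h
  obtain ⟨iV, eV⟩ := CS.int_fin μ (V i) (hVmeas i hi) n
    (fun m hm => hvz i hi hpi m hm.le) h
  rw [← eV]
  have : ∑ m ∈ Finset.range (n+1), w m * h m = ∫ ω, h (U i ω) ∂μ := by
    rw [eU]; refine Finset.sum_congr rfl fun m _ => ?_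
    rw [hU i hi m]
  rw [this, ← integral_sub iU iV, ← integral_const_mul]
  refine integral_mono (iU.sub iV) ((hInt i hi).const_mul _) fun ω => ?_
  exact (le_abs_self _).trans (CS.hA_lip hl A _ _)
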